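/- Under the GAN setup, the supremum over all measurable functions D : Z → (0,1) of J(D) is at least −log 4, and this supremum equals −log 4 if and only if p_G = p_T μ-almost everywhere. Consequently, the minimax value of the GAN game, namely the infimum over probability densities p_G of the supremum over measurable D : Z → (0,1) of J(D), equals −log 4, attained exactly at p_G = p_T (μ-a.e.). -/

import Mathlib

open MeasureTheory
open scoped ENNReal

/-- The GAN objective `J(D) = ∫ p_T·log D dμ + ∫ p_G·log (1−D) dμ`, well defined
with values in `[−∞, 0] ⊆ EReal` since both integrands are nonpositive when `D`
takes values in `(0,1)` and the densities are nonnegative: it is minus the sum of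
the `lintegral`s of the negations of the integrands. -/
noncomputable def GANJ {Z : Type*} [MeasurableSpace Z] (μ : Measure Z)
    (pT pG : Z → ℝ) (D : Z → ℝ) : EReal :=
  - (((∫⁻ z, ENNReal.ofReal (-(pT z * Real.log (D z))) ∂μ) +
      (∫⁻ z, ENNReal.ofReal (-(pG z * Real.log (1 - D z))) ∂μ) : ℝ≥0∞) : EReal)

/-!
The constant discriminator `1/2` always achieves `-log 4`. When `p_G = p_T` nothing does better,
because `d (1 - d) ≤ 1/4`. When `p_G` and `p_T` differ on a set of positive measure, moving halfway
from `1/2` to the optimal discriminator `p_T / (p_T + p_G)` stays inside `(0, 1)` and, by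
`1 - x⁻¹ ≤ log x`, improves the objective by at least `∫ (p_T - p_G)² / (4 (p_T + p_G)) dμ > 0`.
-/

section Pointwise

variable {a b d : ℝ}

/-- The cross-entropy loss of the discriminator output `d` at a point where the true and generated
densities are `a` and `b`; it is the negative of the integrand of the GAN objective. -/
noncomputable def discriminatorLoss (a b d : ℝ) : ℝ :=
  -(a * Real.log d) + -(b * Real.log (1 - d))

/-- The midpoint of `1/2` and the optimal discriminator output `a / (a + b)`. It lies in `(0, 1)`
even if `a` or `b` vanishes, and equals `1/2` for `a = b = 0` since division by zero is zero. -/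
noncomputable def dampedDiscriminator (a b : ℝ) : ℝ :=
  1 / 2 + (a - b) / (4 * (a + b))

lemma neg_mul_log_nonneg (ha : 0 ≤ a) (hd : d ∈ Set.Icc (0 : ℝ) 1) : 0 ≤ -(a * Real.log d) :=
  neg_nonneg.2 (mul_nonpos_of_nonneg_of_nonpos ha (Real.log_nonpos hd.1 hd.2))

lemma discriminatorLoss_nonneg (ha : 0 ≤ a) (hb : 0 ≤ b) (hd : d ∈ Set.Icc (0 : ℝ) 1) :
    0 ≤ discriminatorLoss a b d :=
  add_nonneg (neg_mul_log_nonneg ha hd) (neg_mul_log_nonneg hb (Set.Icc.one_sub_mem hd))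

lemma discriminatorLoss_half (a b : ℝ) :
    discriminatorLoss a b (1 / 2) = (a + b) * Real.log 2 := by
  rw [discriminatorLoss, sub_half, one_div, Real.log_inv]
  ring

lemma discriminatorLoss_self_half_le (ha : 0 ≤ a) (hd : d ∈ Set.Ioo (0 : ℝ) 1) :
    discriminatorLoss a a (1 / 2) ≤ discriminatorLoss a a d := by
  have log_add_le : Real.log d + Real.log (1 - d) ≤ Real.log (1 / 2) + Real.log (1 / 2) := by
    have hd' : 0 < 1 - d := sub_pos.2 hd.2
    rw [← Real.log_mul hd.1.ne' hd'.ne', ← Real.log_mul (by norm_num) (by norm_num)]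
    exact Real.log_le_log (mul_pos hd.1 hd') (by linarith [sq_nonneg (d - 1 / 2)])
  rw [discriminatorLoss, discriminatorLoss, sub_half]
  linarith [mul_le_mul_of_nonneg_left log_add_le ha]

lemma dampedDiscriminator_eq (hab : a + b ≠ 0) :
    dampedDiscriminator a b = (3 * a + b) / (2 * (a + b)) / 2 := by
  rw [dampedDiscriminator]
  field_simp
  ring

lemma one_sub_dampedDiscriminator (a b : ℝ) :
    1 - dampedDiscriminator a b = dampedDiscriminator b a := by
  rw [dampedDiscriminator, dampedDiscriminator, add_comm b a, ← neg_sub a b, neg_div]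
  ring

lemma dampedDiscriminator_pos (ha : 0 ≤ a) (hb : 0 ≤ b) : 0 < dampedDiscriminator a b := by
  rcases (add_nonneg ha hb).eq_or_lt with hab | hab
  · norm_num [dampedDiscriminator, ← hab]
  · have : 0 < 3 * a + b := by linarith
    rw [dampedDiscriminator_eq hab.ne']
    positivity

lemma dampedDiscriminator_mem_Ioo (ha : 0 ≤ a) (hb : 0 ≤ b) :
    dampedDiscriminator a b ∈ Set.Ioo (0 : ℝ) 1 := by
  refine ⟨dampedDiscriminator_pos ha hb, sub_pos.1 ?_⟩
  rw [one_sub_dampedDiscriminator]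
  exact dampedDiscriminator_pos hb ha

lemma sub_div_sub_log_two_le_log_dampedDiscriminator (ha : 0 ≤ a) (hab : 0 < a + b) :
    (a - b) / (3 * a + b) - Real.log 2 ≤ Real.log (dampedDiscriminator a b) := by
  have hpos : 0 < 3 * a + b := by linarith
  have hratio : 0 < (3 * a + b) / (2 * (a + b)) := by positivity
  rw [dampedDiscriminator_eq hab.ne', Real.log_div hratio.ne' two_ne_zero]
  refine sub_le_sub_right (le_of_eq_of_le ?_ (Real.one_sub_inv_le_log_of_pos hratio)) _
  rw [inv_div, one_sub_div hpos.ne']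
  ring

lemma sq_sub_div_le_mul_div_add_mul_div (ha : 0 ≤ a) (hb : 0 ≤ b) (hab : 0 < a + b) :
    (a - b) ^ 2 / (4 * (a + b)) ≤
      a * ((a - b) / (3 * a + b)) + b * ((b - a) / (3 * b + a)) := by
  have ha' : 0 < 3 * a + b := by linarith
  have hb' : 0 < 3 * b + a := by linarith
  have am_gm : (3 * a + b) * (3 * b + a) ≤ 4 * (a + b) ^ 2 := by
    linarith [sq_nonneg (a - b)]
  calc (a - b) ^ 2 / (4 * (a + b))
      = (a - b) ^ 2 * (a + b) / (4 * (a + b) ^ 2) := by field_simp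
    _ ≤ (a - b) ^ 2 * (a + b) / ((3 * a + b) * (3 * b + a)) := by gcongr
    _ = a * ((a - b) / (3 * a + b)) + b * ((b - a) / (3 * b + a)) := by
      rw [← mul_div_assoc, ← mul_div_assoc, div_add_div _ _ ha'.ne' hb'.ne']
      congr 1
      ring

lemma discriminatorLoss_damped_add_le_half (ha : 0 ≤ a) (hb : 0 ≤ b) :
    discriminatorLoss a b (dampedDiscriminator a b) + (a - b) ^ 2 / (4 * (a + b)) ≤
      discriminatorLoss a b (1 / 2) := by
  rw [discriminatorLoss_half, discriminatorLoss, one_sub_dampedDiscriminator]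
  rcases (add_nonneg ha hb).eq_or_lt with hab | hab
  · obtain ⟨rfl, rfl⟩ := (add_eq_zero_iff_of_nonneg ha hb).1 hab.symm
    simp
  · have hloga := mul_le_mul_of_nonneg_left
      (sub_div_sub_log_two_le_log_dampedDiscriminator ha hab) ha
    have hlogb := mul_le_mul_of_nonneg_left
      (sub_div_sub_log_two_le_log_dampedDiscriminator hb (add_comm a b ▸ hab)) hb
    linarith [sq_sub_div_le_mul_div_add_mul_div ha hb hab]

lemma eq_of_sq_sub_div_nonpos (ha : 0 ≤ a) (hb : 0 ≤ b)
    (h : (a - b) ^ 2 / (4 * (a + b)) ≤ 0) : b = a := by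
  by_contra hne
  have hsq : 0 < (a - b) ^ 2 := sq_pos_iff.2 (sub_ne_zero.2 (Ne.symm hne))
  have hab : 0 < a + b := (add_nonneg ha hb).lt_of_ne' fun h0 => hne (by linarith)
  exact h.not_gt (div_pos hsq (mul_pos four_pos hab))

end Pointwise

section Objective

variable {Z : Type*} [MeasurableSpace Z] {μ : Measure Z} {pT pG D : Z → ℝ}

/-- The value of the inner maximization of the GAN game: the supremum of the objective over
measurable discriminators with values in `(0, 1)`. -/
noncomputable def discriminatorValue (μ : Measure Z) (pT pG : Z → ℝ) : EReal :=
  ⨆ (D : Z → ℝ) (_ : Measurable D ∧ ∀ z, D z ∈ Set.Ioo (0 : ℝ) 1), GANJ μ pT pG D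

lemma GANJ_le_discriminatorValue (hDm : Measurable D) (hD : ∀ z, D z ∈ Set.Ioo (0 : ℝ) 1) :
    GANJ μ pT pG D ≤ discriminatorValue μ pT pG :=
  le_iSup₂_of_le D ⟨hDm, hD⟩ le_rfl

lemma measurable_dampedDiscriminator (hTm : Measurable pT) (hGm : Measurable pG) :
    Measurable fun z => dampedDiscriminator (pT z) (pG z) := by
  unfold dampedDiscriminator
  fun_prop

lemma GANJ_eq_neg_lintegral_discriminatorLoss (hTm : Measurable pT) (hT : ∀ z, 0 ≤ pT z)
    (hG : ∀ z, 0 ≤ pG z) (hDm : Measurable D) (hD : ∀ z, D z ∈ Set.Icc (0 : ℝ) 1) :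
    GANJ μ pT pG D =
      -((∫⁻ z, ENNReal.ofReal (discriminatorLoss (pT z) (pG z) (D z)) ∂μ : ℝ≥0∞) : EReal) := by
  rw [GANJ, ← lintegral_add_left (by fun_prop)]
  congr 2
  exact lintegral_congr fun z => (ENNReal.ofReal_add (neg_mul_log_nonneg (hT z) (hD z))
    (neg_mul_log_nonneg (hG z) (Set.Icc.one_sub_mem (hD z)))).symm

lemma GANJ_const_half (μ : Measure Z) (pT pG : Z → ℝ) :
    GANJ μ pT pG (fun _ => 1 / 2) =
      -((((∫⁻ z, ENNReal.ofReal (pT z) ∂μ) + ∫⁻ z, ENNReal.ofReal (pG z) ∂μ) *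
        ENNReal.ofReal (Real.log 2) : ℝ≥0∞) : EReal) := by
  have lintegral_half (p : Z → ℝ) :
      ∫⁻ z, ENNReal.ofReal (-(p z * Real.log (1 / 2))) ∂μ =
        (∫⁻ z, ENNReal.ofReal (p z) ∂μ) * ENNReal.ofReal (Real.log 2) := by
    rw [← lintegral_mul_const' _ _ ENNReal.ofReal_ne_top]
    refine lintegral_congr fun z => ?_
    rw [← ENNReal.ofReal_mul' (Real.log_nonneg one_le_two), one_div, Real.log_inv, mul_neg,
      neg_neg]
  rw [GANJ, sub_half, lintegral_half, lintegral_half, add_mul]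

lemma GANJ_const_half_le_discriminatorValue (μ : Measure Z) (pT pG : Z → ℝ) :
    GANJ μ pT pG (fun _ => 1 / 2) ≤ discriminatorValue μ pT pG :=
  GANJ_le_discriminatorValue measurable_const fun _ => by norm_num

lemma discriminatorValue_eq_GANJ_const_half_of_ae_eq (hTm : Measurable pT) (hT : ∀ z, 0 ≤ pT z)
    (hG : ∀ z, 0 ≤ pG z) (h : pG =ᵐ[μ] pT) :
    discriminatorValue μ pT pG = GANJ μ pT pG (fun _ => 1 / 2) := by
  refine le_antisymm (iSup₂_le fun D hD => ?_) (GANJ_const_half_le_discriminatorValue μ pT pG)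
  rw [GANJ_eq_neg_lintegral_discriminatorLoss hTm hT hG hD.1
      fun z => Set.Ioo_subset_Icc_self (hD.2 z),
    GANJ_eq_neg_lintegral_discriminatorLoss hTm hT hG measurable_const fun _ => by norm_num,
    EReal.neg_le_neg_iff, EReal.coe_ennreal_le_coe_ennreal_iff]
  refine lintegral_mono_ae (h.mono fun z hz => ENNReal.ofReal_le_ofReal ?_)
  rw [hz]
  exact discriminatorLoss_self_half_le (hT z) (hD.2 z)

lemma lintegral_discriminatorLoss_damped_add_le_half (hTm : Measurable pT) (hGm : Measurable pG)
    (hT : ∀ z, 0 ≤ pT z) (hG : ∀ z, 0 ≤ pG z) :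
    ∫⁻ z, ENNReal.ofReal
        (discriminatorLoss (pT z) (pG z) (dampedDiscriminator (pT z) (pG z))) ∂μ +
      ∫⁻ z, ENNReal.ofReal ((pT z - pG z) ^ 2 / (4 * (pT z + pG z))) ∂μ ≤
      ∫⁻ z, ENNReal.ofReal (discriminatorLoss (pT z) (pG z) (1 / 2)) ∂μ := by
  rw [← lintegral_add_right _ (by fun_prop)]
  refine lintegral_mono fun z => ?_
  have hloss : 0 ≤ discriminatorLoss (pT z) (pG z) (dampedDiscriminator (pT z) (pG z)) :=
    discriminatorLoss_nonneg (hT z) (hG z)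
      (Set.Ioo_subset_Icc_self (dampedDiscriminator_mem_Ioo (hT z) (hG z)))
  have hgain : 0 ≤ (pT z - pG z) ^ 2 / (4 * (pT z + pG z)) :=
    div_nonneg (sq_nonneg _) (mul_nonneg zero_le_four (add_nonneg (hT z) (hG z)))
  rw [← ENNReal.ofReal_add hloss hgain]
  exact ENNReal.ofReal_le_ofReal (discriminatorLoss_damped_add_le_half (hT z) (hG z))

lemma ae_eq_of_GANJ_damped_le_const_half (hTm : Measurable pT) (hGm : Measurable pG)
    (hT : ∀ z, 0 ≤ pT z) (hG : ∀ z, 0 ≤ pG z)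
    (hfin : GANJ μ pT pG (fun _ => 1 / 2) ≠ ⊥)
    (h : GANJ μ pT pG (fun z => dampedDiscriminator (pT z) (pG z)) ≤
      GANJ μ pT pG (fun _ => 1 / 2)) :
    pG =ᵐ[μ] pT := by
  rw [GANJ_eq_neg_lintegral_discriminatorLoss hTm hT hG measurable_const
    fun _ => by norm_num] at h hfin
  rw [GANJ_eq_neg_lintegral_discriminatorLoss hTm hT hG
      (measurable_dampedDiscriminator hTm hGm)
      fun z => Set.Ioo_subset_Icc_self (dampedDiscriminator_mem_Ioo (hT z) (hG z)),
    EReal.neg_le_neg_iff, EReal.coe_ennreal_le_coe_ennreal_iff] at h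
  have hhalf : ∫⁻ z, ENNReal.ofReal (discriminatorLoss (pT z) (pG z) (1 / 2)) ∂μ ≠ ∞ := by
    simpa using hfin
  have hgain : ∫⁻ z, ENNReal.ofReal ((pT z - pG z) ^ 2 / (4 * (pT z + pG z))) ∂μ = 0 := by
    have hle := (add_le_add_left h _).trans
      (lintegral_discriminatorLoss_damped_add_le_half hTm hGm hT hG)
    simpa using (ENNReal.add_le_add_iff_left hhalf).1 (hle.trans_eq (add_zero _).symm)
  filter_upwards [(lintegral_eq_zero_iff (by fun_prop)).1 hgain] with z hz
  exact eq_of_sq_sub_div_nonpos (hT z) (hG z) (ENNReal.ofReal_eq_zero.1 hz)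

theorem discriminatorValue_eq_GANJ_const_half_iff (hTm : Measurable pT) (hGm : Measurable pG)
    (hT : ∀ z, 0 ≤ pT z) (hG : ∀ z, 0 ≤ pG z)
    (hfin : GANJ μ pT pG (fun _ => 1 / 2) ≠ ⊥) :
    discriminatorValue μ pT pG = GANJ μ pT pG (fun _ => 1 / 2) ↔ pG =ᵐ[μ] pT := by
  refine ⟨fun h => ae_eq_of_GANJ_damped_le_const_half hTm hGm hT hG hfin ?_,
    discriminatorValue_eq_GANJ_const_half_of_ae_eq hTm hT hG⟩
  exact (GANJ_le_discriminatorValue (measurable_dampedDiscriminator hTm hGm)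
    fun z => dampedDiscriminator_mem_Ioo (hT z) (hG z)).trans_eq h

lemma GANJ_const_half_of_lintegral_eq_one (hT : ∫⁻ z, ENNReal.ofReal (pT z) ∂μ = 1)
    (hG : ∫⁻ z, ENNReal.ofReal (pG z) ∂μ = 1) :
    GANJ μ pT pG (fun _ => 1 / 2) = ((-Real.log 4 : ℝ) : EReal) := by
  have log_four : Real.log 4 = 2 * Real.log 2 := by
    rw [← Real.log_rpow two_pos]
    norm_num
  have two_mul_ofReal : (1 + 1) * ENNReal.ofReal (Real.log 2) = ENNReal.ofReal (Real.log 4) := by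
    rw [log_four, ENNReal.ofReal_mul zero_le_two, one_add_one_eq_two, ENNReal.ofReal_ofNat]
  rw [GANJ_const_half, hT, hG, two_mul_ofReal, EReal.coe_ennreal_ofReal,
    max_eq_left (Real.log_nonneg (by norm_num)), EReal.coe_neg]

end Objective

/-- **Propositions 1+2 combined.** Under the GAN setup, for every
admissible generator density `p_G` the supremum over measurable discriminators
`D : Z → (0,1)` of `J(D)` is at least `−log 4`, with equality iff `p_G = p_T`
μ-a.e.; consequently the minimax value of the GAN game—the infimum over
admissible generator densities of that supremum—equals `−log 4`, attained
exactly at `p_G = p_T` (μ-a.e.). -/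
theorem stmt_6 {Z : Type*} [MeasurableSpace Z] (μ : Measure Z) (pT : Z → ℝ)
    (hpTm : Measurable pT) (hpT0 : ∀ z, 0 ≤ pT z)
    (hpT1 : ∫⁻ z, ENNReal.ofReal (pT z) ∂μ = 1) :
    (∀ pG : Z → ℝ, Measurable pG → (∀ z, 0 ≤ pG z) →
      (∫⁻ z, ENNReal.ofReal (pG z) ∂μ) = 1 →
      ((-Real.log 4 : ℝ) : EReal) ≤
        (⨆ (D : Z → ℝ) (_ : Measurable D ∧ ∀ z, D z ∈ Set.Ioo (0:ℝ) 1),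
          GANJ μ pT pG D) ∧
      ((⨆ (D : Z → ℝ) (_ : Measurable D ∧ ∀ z, D z ∈ Set.Ioo (0:ℝ) 1),
          GANJ μ pT pG D) = ((-Real.log 4 : ℝ) : EReal) ↔ pG =ᵐ[μ] pT)) ∧
    (⨅ (pG : Z → ℝ) (_ : Measurable pG ∧ (∀ z, 0 ≤ pG z) ∧
        (∫⁻ z, ENNReal.ofReal (pG z) ∂μ) = 1),
      ⨆ (D : Z → ℝ) (_ : Measurable D ∧ ∀ z, D z ∈ Set.Ioo (0:ℝ) 1),
        GANJ μ pT pG D) = ((-Real.log 4 : ℝ) : EReal) := by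
  have half_value {pG : Z → ℝ} (hG1 : ∫⁻ z, ENNReal.ofReal (pG z) ∂μ = 1) :
      GANJ μ pT pG (fun _ => 1 / 2) = ((-Real.log 4 : ℝ) : EReal) :=
    GANJ_const_half_of_lintegral_eq_one hpT1 hG1
  have lower_bound {pG : Z → ℝ} (hG1 : ∫⁻ z, ENNReal.ofReal (pG z) ∂μ = 1) :
      ((-Real.log 4 : ℝ) : EReal) ≤ discriminatorValue μ pT pG :=
    half_value hG1 ▸ GANJ_const_half_le_discriminatorValue μ pT pG
  have equality_iff {pG : Z → ℝ} (hGm : Measurable pG) (hG0 : ∀ z, 0 ≤ pG z)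
      (hG1 : ∫⁻ z, ENNReal.ofReal (pG z) ∂μ = 1) :
      discriminatorValue μ pT pG = ((-Real.log 4 : ℝ) : EReal) ↔ pG =ᵐ[μ] pT :=
    half_value hG1 ▸ discriminatorValue_eq_GANJ_const_half_iff hpTm hGm hpT0 hG0
      (half_value hG1 ▸ EReal.coe_ne_bot _)
  refine ⟨fun pG hGm hG0 hG1 => ⟨lower_bound hG1, equality_iff hGm hG0 hG1⟩, le_antisymm ?_ ?_⟩
  · exact iInf₂_le_of_le pT ⟨hpTm, hpT0, hpT1⟩
      ((equality_iff hpTm hpT0 hpT1).2 (ae_eq_refl pT)).le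
  · exact le_iInf₂ fun pG hG => lower_bound hG.2.2
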